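/- (Theorem: joint error identity.) Assume the nonlinear DWR setting below, with continuous primal solution u, continuous adjoint solution z, discrete primal solution u_kh ∈ X_h and discrete adjoint solution z_kh ∈ X_h. Then J(u) − J(u_kh) = (1/2)·ρ(u_kh)(z − z_kh) + (1/2)·ρ*(u_kh, z_kh)(u − u_kh) + R_kh, where the remainder is R_kh := (1/2)·∫₀¹ D³L((u_kh,z_kh) + s·e)(e,e,e)·s·(s−1) ds with e := (u,z) − (u_kh,z_kh) in X × X and D³L the third Fréchet derivative of the Lagrangian L. -/

import Mathlib

/-!
The partial derivatives of the Lagrangian `L` are the adjoint residual and the primal residual, so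
`(u, z)` is a stationary point of `L`. Write `L(u, z) - L(v, w)` as the integral of the directional
derivative `L' e`, with `e = (u, z) - (v, w)`, along the segment from `(v, w)` to `(u, z)`, and
apply the trapezoidal rule to it: the endpoint `(u, z)` contributes nothing and `(v, w)` contributes
the two halved residuals. Since `L(v, w) = J(v) + ρ(v)(w)`, passing from `L` to `J` costs `ρ(v)(w)`,
which is zero for a discrete primal solution `v` tested with a discrete `w`.
-/

open Set MeasureTheory
open scoped Interval

section TrapezoidalRule

variable {E G : Type*} [NormedAddCommGroup E] [NormedAddCommGroup G]

lemma integral_eq_trapezoid_add_integral [NormedSpace ℝ G] [CompleteSpace G]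
    {f f' f'' : ℝ → G} {a b : ℝ}
    (hf : ∀ t ∈ [[a, b]], HasDerivAt f (f' t) t) (hf' : ∀ t ∈ [[a, b]], HasDerivAt f' (f'' t) t)
    (hf'' : IntervalIntegrable f'' volume a b) :
    ∫ t in a..b, f t = ((b - a) / 2) • (f a + f b)
      + (1 / 2 : ℝ) • ∫ t in a..b, ((t - a) * (t - b)) • f'' t := by
  have hweight (t : ℝ) : HasDerivAt (fun t ↦ (t - a) * (t - b)) (2 * t - a - b) t :=
    (((hasDerivAt_id' t).sub_const a).mul ((hasDerivAt_id' t).sub_const b)).congr_deriv (by ring)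
  have hweight' (t : ℝ) : HasDerivAt (fun t ↦ 2 * t - a - b) 2 t :=
    ((((hasDerivAt_id' t).const_mul 2).sub_const a).sub_const b).congr_deriv (by ring)
  have hf'_int : IntervalIntegrable f' volume a b :=
    ContinuousOn.intervalIntegrable fun t ht ↦ (hf' t ht).continuousAt.continuousWithinAt
  -- The weight vanishes at both endpoints, so there are no boundary terms.
  have hparts : ∫ t in a..b, ((t - a) * (t - b)) • f'' t
      = -∫ t in a..b, (2 * t - a - b) • f' t := by
    rw [intervalIntegral.integral_smul_deriv_eq_deriv_smul (fun t _ ↦ hweight t) hf'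
      (Continuous.intervalIntegrable (by fun_prop) a b) hf'']
    simp
  have hparts' : ∫ t in a..b, (2 * t - a - b) • f' t
      = (b - a) • (f a + f b) - (2 : ℝ) • ∫ t in a..b, f t := by
    rw [intervalIntegral.integral_smul_deriv_eq_deriv_smul (fun t _ ↦ hweight' t) hf
      intervalIntegrable_const hf'_int, intervalIntegral.integral_smul]
    module
  rw [hparts, hparts']
  module

lemma hasDerivAt_iteratedFDeriv_add_smul {𝕜 : Type*} [NontriviallyNormedField 𝕜]
    [NormedSpace 𝕜 E] [NormedSpace 𝕜 G] {f : E → G} {x y : E} {t : 𝕜} {k : ℕ}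
    (hf : ContDiffAt 𝕜 (k + 1) f (x + t • y)) :
    HasDerivAt (fun s : 𝕜 ↦ iteratedFDeriv 𝕜 k f (x + s • y) fun _ ↦ y)
      (iteratedFDeriv 𝕜 (k + 1) f (x + t • y) fun _ ↦ y) t := by
  have hdiff : DifferentiableAt 𝕜 (iteratedFDeriv 𝕜 k f) (x + t • y) :=
    hf.differentiableAt_iteratedFDeriv (mod_cast k.lt_succ_self)
  rw [← hf.deriv_fderiv_add_smul]
  exact DifferentiableAt.hasDerivAt (by fun_prop)

lemma map_add_sub_eq_trapezoid_add_integral [NormedSpace ℝ E] [NormedSpace ℝ G] [CompleteSpace G]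
    {f : E → G} {x y : E} (hf : ∀ t ∈ Icc (0 : ℝ) 1, ContDiffAt ℝ 3 f (x + t • y)) :
    f (x + y) - f x = (1 / 2 : ℝ) • (fderiv ℝ f x y + fderiv ℝ f (x + y) y)
      + (1 / 2 : ℝ) • ∫ s in (0 : ℝ)..1,
          (s * (s - 1)) • iteratedFDeriv ℝ 3 f (x + s • y) fun _ ↦ y := by
  let D (k : ℕ) (t : ℝ) : G := iteratedFDeriv ℝ k f (x + t • y) fun _ ↦ y
  rw [← uIcc_of_le zero_le_one] at hf
  have hD (k : ℕ) (hk : k < 3) (t : ℝ) (ht : t ∈ [[(0 : ℝ), 1]]) :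
      HasDerivAt (D k) (D (k + 1) t) t :=
    hasDerivAt_iteratedFDeriv_add_smul ((hf t ht).of_le (mod_cast hk))
  have hD₁ : IntervalIntegrable (D 1) volume 0 1 :=
    ContinuousOn.intervalIntegrable fun t ht ↦ (hD 1 (by simp) t ht).continuousAt.continuousWithinAt
  have hD₃ : IntervalIntegrable (D 3) volume 0 1 := by
    refine ContinuousOn.intervalIntegrable fun t ht ↦ ?_
    have hcont : ContinuousAt (iteratedFDeriv ℝ 3 f) (x + t • y) :=
      (hf t ht).continuousAt_iteratedFDeriv le_rfl
    exact (hcont.comp (x := t) (by fun_prop)).continuousWithinAt.eval_const _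
  calc f (x + y) - f x
    _ = ∫ t in (0 : ℝ)..1, D 1 t := by
      rw [intervalIntegral.integral_eq_sub_of_hasDerivAt (hD 0 (by simp)) hD₁]
      simp [D]
    _ = ((1 - 0) / 2 : ℝ) • (D 1 0 + D 1 1)
        + (1 / 2 : ℝ) • ∫ s in (0 : ℝ)..1, ((s - 0) * (s - 1)) • D 3 s :=
      integral_eq_trapezoid_add_integral (hD 1 (by simp)) (hD 2 (by simp)) hD₃
    _ = _ := by simp [D]

end TrapezoidalRule

section Lagrangian

variable {𝕜 X Y G : Type*} [NontriviallyNormedField 𝕜]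
  [NormedAddCommGroup Y] [NormedSpace 𝕜 Y] [NormedAddCommGroup G] [NormedSpace 𝕜 G]
  (F : Y →L[𝕜] G) (J : X → G) (A : X → Y →L[𝕜] G)

/-- The Lagrangian `L(v, w) = J(v) - A(v, w) + F(w)` of the goal functional `J` under the constraint
`A(v, ·) = F`. Trial space `X` and test space `Y` may differ, as in Petrov–Galerkin methods. -/
def lagrangian (p : X × Y) : G := J p.1 - A p.1 p.2 + F p.2

/-- The primal residual `ρ(v) = F - A(v, ·)`, which vanishes exactly at the primal solutions. -/
def primalResidual (v : X) : Y →L[𝕜] G := F - A v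

/-- The adjoint residual `ρ*(v, w) = J'(v) - A'_u(v)(·, w)`; it vanishes exactly when `w` solves the
adjoint problem linearised at `v`. It is a difference of two `fderiv`s, hence meaningful only if
both `J` and `A(·, w)` are differentiable at `v`. -/
noncomputable def adjointResidual [NormedAddCommGroup X] [NormedSpace 𝕜 X] (v : X) (w : Y) :
    X →L[𝕜] G :=
  fderiv 𝕜 J v - fderiv 𝕜 (fun v' ↦ A v' w) v

variable {F J A} {v : X} {w : Y}

lemma primalResidual_eq_zero_iff : primalResidual F A v = 0 ↔ ∀ φ, A v φ = F φ := by
  simp [primalResidual, ContinuousLinearMap.ext_iff, sub_eq_zero, eq_comm]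

lemma lagrangian_eq_add_primalResidual :
    lagrangian F J A (v, w) = J v + primalResidual F A v w := by
  simp only [lagrangian, primalResidual, sub_apply]
  abel

variable [NormedAddCommGroup X] [NormedSpace 𝕜 X]

lemma adjointResidual_eq_zero_iff :
    adjointResidual J A v w = 0 ↔ ∀ ψ, fderiv 𝕜 J v ψ = fderiv 𝕜 (fun v' ↦ A v' w) v ψ := by
  simp [adjointResidual, ContinuousLinearMap.ext_iff, sub_eq_zero]

lemma differentiableAt_of_lagrangian (h₀ : DifferentiableAt 𝕜 (lagrangian F J A) (v, 0)) :
    DifferentiableAt 𝕜 J v := by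
  have hJ : J = fun v' ↦ lagrangian F J A (v', 0) := by simp [lagrangian]
  rw [hJ]
  fun_prop

lemma fderiv_lagrangian (h₀ : DifferentiableAt 𝕜 (lagrangian F J A) (v, 0))
    (h : DifferentiableAt 𝕜 (lagrangian F J A) (v, w)) :
    fderiv 𝕜 (lagrangian F J A) (v, w)
      = (adjointResidual J A v w).coprod (primalResidual F A v) := by
  have hJ : DifferentiableAt 𝕜 J v := differentiableAt_of_lagrangian h₀
  have hA : DifferentiableAt 𝕜 (fun v' ↦ A v' w) v := by
    have hA_eq : (fun v' ↦ A v' w) = fun v' ↦ J v' + F w - lagrangian F J A (v', w) := by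
      funext v'
      simp only [lagrangian]
      abel
    rw [hA_eq]
    fun_prop
  have hleft : HasFDerivAt (fun v' ↦ lagrangian F J A (v', w)) (adjointResidual J A v w) v :=
    (hJ.hasFDerivAt.sub hA.hasFDerivAt).add_const (F w)
  have hright : HasFDerivAt (fun w' ↦ lagrangian F J A (v, w')) (primalResidual F A v) w :=
    (((A v).hasFDerivAt.const_sub (J v)).add F.hasFDerivAt).congr_fderiv
      (neg_add_eq_sub (A v) F)
  apply ContinuousLinearMap.prod_ext
  · rw [ContinuousLinearMap.coprod_comp_inl]
    exact (h.hasFDerivAt.comp (f := (·, w)) v (hasFDerivAt_prodMk_left v w)).unique hleft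
  · rw [ContinuousLinearMap.coprod_comp_inr]
    exact (h.hasFDerivAt.comp (f := (v, ·)) w (hasFDerivAt_prodMk_right v w)).unique hright

end Lagrangian

/-- For arbitrary approximations `v` and `w`, the additional term `ρ(v)(w)` accounts for an inexact
solution of the discrete primal problem. -/
theorem joint_error_identity_general {X Y G : Type*}
    [NormedAddCommGroup X] [NormedSpace ℝ X] [NormedAddCommGroup Y] [NormedSpace ℝ Y]
    [NormedAddCommGroup G] [NormedSpace ℝ G] [CompleteSpace G]
    {F : Y →L[ℝ] G} {J : X → G} {A : X → Y →L[ℝ] G} (hL : ContDiff ℝ 3 (lagrangian F J A))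
    {u : X} {z : Y} (hu : primalResidual F A u = 0) (hz : adjointResidual J A u z = 0)
    (v : X) (w : Y) :
    J u - J v
      = (1 / 2 : ℝ) • primalResidual F A v (z - w) + (1 / 2 : ℝ) • adjointResidual J A v w (u - v)
        + primalResidual F A v w
        + (1 / 2 : ℝ) • ∫ s in (0 : ℝ)..1, (s * (s - 1)) •
            iteratedFDeriv ℝ 3 (lagrangian F J A) ((v, w) + s • ((u, z) - (v, w)))
              fun _ ↦ (u, z) - (v, w) := by
  have hdiff : Differentiable ℝ (lagrangian F J A) := hL.differentiable (by simp)
  have hstationary : fderiv ℝ (lagrangian F J A) (u, z) = 0 := by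
    rw [fderiv_lagrangian (hdiff _) (hdiff _), hu, hz]
    ext <;> simp
  have htrapezoid := map_add_sub_eq_trapezoid_add_integral (x := (v, w)) (y := (u, z) - (v, w))
    fun _ _ ↦ hL.contDiffAt
  rw [add_sub_cancel, hstationary, fderiv_lagrangian (hdiff _) (hdiff _),
    lagrangian_eq_add_primalResidual, lagrangian_eq_add_primalResidual, hu] at htrapezoid
  simp only [Prod.mk_sub_mk, ContinuousLinearMap.coprod_apply, zero_apply, add_zero]
    at htrapezoid ⊢
  rw [sub_add_eq_sub_sub, sub_eq_iff_eq_add] at htrapezoid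
  rw [htrapezoid]
  module

/-- Joint error identity of the dual-weighted residual method (nonlinear setting):
`J(u) − J(u_kh) = ½·ρ(u_kh)(z − z_kh) + ½·ρ*(u_kh,z_kh)(u − u_kh) + R_kh`, where the
remainder is `R_kh = ½·∫₀¹ D³L((u_kh,z_kh) + s·e)(e,e,e)·s·(s−1) ds` with
`e = (u,z) − (u_kh,z_kh)` and `L(v,w) = J(v) − A(v,w) + F(w)` the Lagrangian. -/
theorem joint_error_identity
    {X : Type*} [NormedAddCommGroup X] [NormedSpace ℝ X]
    (Xh : Submodule ℝ X)
    (F : X →L[ℝ] ℝ) (J : X → ℝ) (A : X → X →L[ℝ] ℝ)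
    (L : X × X → ℝ) (hLdef : ∀ v w : X, L (v, w) = J v - A v w + F w)
    (hL : ContDiff ℝ 3 L)
    (u z ukh zkh : X)
    (hu : ∀ φ : X, A u φ = F φ)
    (hz : ∀ ψ : X, fderiv ℝ J u ψ = fderiv ℝ (fun v => A v z) u ψ)
    (hukh : ukh ∈ Xh) (hzkh : zkh ∈ Xh)
    (hukh_sol : ∀ φh ∈ Xh, A ukh φh = F φh)
    (hzkh_sol : ∀ ψh ∈ Xh, fderiv ℝ J ukh ψh = fderiv ℝ (fun v => A v zkh) ukh ψh)
    (e : X × X) (he : e = (u, z) - (ukh, zkh)) :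
    J u - J ukh
      = (1 / 2) * (F (z - zkh) - A ukh (z - zkh))
        + (1 / 2) * (fderiv ℝ J ukh (u - ukh)
            - fderiv ℝ (fun v => A v zkh) ukh (u - ukh))
        + (1 / 2) * ∫ s in (0 : ℝ)..1,
            (iteratedFDeriv ℝ 3 L ((ukh, zkh) + s • e) (fun _ => e)) * s * (s - 1) := by
  obtain rfl : L = lagrangian F J A := funext fun p ↦ hLdef p.1 p.2
  subst he
  simpa [primalResidual, adjointResidual, hukh_sol zkh hzkh, mul_comm, mul_left_comm, mul_assoc]
    using joint_error_identity_general hL (primalResidual_eq_zero_iff.2 hu)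
      (adjointResidual_eq_zero_iff.2 hz) ukh zkh
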